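/- PAC-Bayes bound (Theorem 1 / Maurer): Let Z be a measurable space, D a probability measure on Z, H a measurable space of hypotheses, and ℓ : H × Z → [0,1] a measurable loss. Let Q₀ be a probability measure on H (the prior) and let n ≥ 1, δ ∈ (0,1]. Then with probability at least 1 − δ over an i.i.d. sample S = (z₁,…,zₙ) drawn from Dⁿ, simultaneously for every probability measure Q on H (the posterior): kl(R̂_S(Q) ‖ R_D(Q)) ≤ (KL(Q ‖ Q₀) + log(2√n/δ)) / n, where R̂_S(Q) = E_{h∼Q}[(1/n) Σ_{i=1}^n ℓ(h, z_i)], R_D(Q) = E_{h∼Q} E_{z∼D}[ℓ(h, z)]. -/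

import Mathlib

open MeasureTheory ProbabilityTheory
open scoped Classical

/-- The binary Kullback–Leibler divergence between Bernoulli parameters `q` and `q'`. -/
noncomputable def binKl (q q' : ℝ) : ℝ :=
  q * Real.log (q / q') + (1 - q) * Real.log ((1 - q) / (1 - q'))

/-- The Kullback–Leibler divergence between measures `Q` and `Q₀`, taken to be `+∞` when
`Q` is not absolutely continuous with respect to `Q₀` (or the log-density is not integrable). -/
noncomputable def klDiv {α : Type*} [MeasurableSpace α] (Q Q₀ : Measure α) : ENNReal :=
  if Q ≪ Q₀ ∧ Integrable (fun a => Real.log (Q.rnDeriv Q₀ a).toReal) Q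
  then ENNReal.ofReal (∫ a, Real.log (Q.rnDeriv Q₀ a).toReal ∂Q)
  else ⊤

/-!
The binary divergence is the supremum of functions that are affine in both arguments, so
Donsker–Varadhan's change of measure can be applied to each of them and the convexity of the
divergence is never needed. For a single hypothesis all the resulting exponentials are dominated by
one envelope. Replace every loss `x i` by an independent Bernoulli variable of parameter `x i`
(which can only increase exponential moments, by convexity of `exp`), and let `T` be the set of
successes: the envelope is the expectation of the ratio of the maximal likelihood of `T` to its
likelihood under the true risk. Integrating over the sample cancels the likelihood, so the expected
envelope is at most `∑ C(n, k) (k/n)^k (1 - k/n)^(n - k)`. This is at most `2√n`, because the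
Krichevsky–Trofimov mixture is a probability and loses at most a factor `2√n` against the maximal
likelihood. Markov's inequality for the prior average of the envelope concludes.
-/

open Finset Real
open scoped ENNReal

section Preliminaries

theorem sum_antidiagonal_choose_mul_ascPochhammer_eval {R : Type*} [CommRing R] (r s : R) (n : ℕ) :
    ∑ ij ∈ antidiagonal n, (n.choose ij.1 : R) *
        ((ascPochhammer R ij.1).eval r * (ascPochhammer R ij.2).eval s) =
      (ascPochhammer R n).eval (r + s) := by
  have eval_eq (t : R) (k : ℕ) : (ascPochhammer R k).eval t =
      Int.negOnePow k • (descPochhammer ℤ k).smeval (-t) := by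
    rw [← Polynomial.ascPochhammer_smeval_neg_eq_descPochhammer, neg_neg,
      Polynomial.ascPochhammer_smeval_eq_eval]
  rw [eval_eq (r + s), neg_add, Ring.descPochhammer_smeval_add n (.all _ _), smul_sum]
  refine sum_congr rfl fun ij hij => ?_
  rw [eval_eq r, eval_eq s, smul_mul_smul_comm, ← Int.negOnePow_add, ← Nat.cast_add,
    mem_antidiagonal.mp hij, mul_smul_comm]

theorem sum_finset_apply_card_compl {ι M : Type*} [Fintype ι] [DecidableEq ι] [AddCommMonoid M]
    (f : ℕ → ℕ → M) :
    ∑ t : Finset ι, f t.card tᶜ.card =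
      ∑ ij ∈ antidiagonal (Fintype.card ι), (Fintype.card ι).choose ij.1 • f ij.1 ij.2 := by
  simp only [card_compl]
  rw [Nat.sum_antidiagonal_eq_sum_range_succ_mk, ← powerset_univ,
    sum_powerset_apply_card fun k => f k (Fintype.card ι - k), card_univ]

theorem map_add_le_mul_of_antitone_ratio {u r : ℕ → ℝ} (hu₀ : u 0 = 1) (hu : ∀ k, 0 ≤ u k)
    (hr₀ : ∀ k, 0 ≤ r k) (hr : Antitone r) (hsucc : ∀ k, u (k + 1) = u k * r k) (k m : ℕ) :
    u (k + m) ≤ u k * u m := by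
  induction k with
  | zero => simp [hu₀]
  | succ k ih =>
    calc u (k + 1 + m) = u (k + m) * r (k + m) := by rw [Nat.add_right_comm, hsucc]
      _ ≤ u k * u m * r k :=
        mul_le_mul ih (hr (Nat.le_add_right k m)) (hr₀ _) (mul_nonneg (hu k) (hu m))
      _ = u (k + 1) * u m := by rw [hsucc]; ring

end Preliminaries

section KrichevskyTrofimov

/-- The rising factorial `(1/2)(3/2)⋯(k - 1/2)`. The Krichevsky–Trofimov estimator gives each binary
word with `k` ones and `m` zeros the probability `halfRising k * halfRising m / (k + m)!`. -/
noncomputable def halfRising (k : ℕ) : ℝ := (ascPochhammer ℝ k).eval (1 / 2)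

/-- The largest probability `θ ^ k * (1 - θ) ^ m` that a Bernoulli source can give to a binary word
with `k` ones and `m` zeros, attained at `θ = k / (k + m)`. The value at `k = m = 0` is `1`. -/
noncomputable def maxLikelihood (k m : ℕ) : ℝ :=
  ((k : ℝ) / (k + m)) ^ k * ((m : ℝ) / (k + m)) ^ m

theorem halfRising_zero : halfRising 0 = 1 := by simp [halfRising]

theorem halfRising_succ (k : ℕ) : halfRising (k + 1) = halfRising k * (k + 1 / 2) := by
  rw [halfRising, ascPochhammer_succ_eval, add_comm (1 / 2 : ℝ), halfRising]

theorem halfRising_pos (k : ℕ) : 0 < halfRising k := ascPochhammer_pos k _ (by norm_num)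

theorem sum_antidiagonal_choose_mul_halfRising (n : ℕ) :
    ∑ ij ∈ antidiagonal n, (n.choose ij.1 : ℝ) * (halfRising ij.1 * halfRising ij.2) =
      n.factorial := by
  simp only [halfRising]
  rw [sum_antidiagonal_choose_mul_ascPochhammer_eval, add_halves, ascPochhammer_eval_one]

theorem factorial_le_two_mul_sqrt_mul_halfRising {n : ℕ} (hn : 1 ≤ n) :
    (n.factorial : ℝ) ≤ 2 * √n * halfRising n := by
  induction n, hn using Nat.le_induction with
  | base => simp [halfRising]
  | succ n _ ih =>
    have sqrt_step : ((n : ℝ) + 1) * √n ≤ √(n + 1) * (n + 1 / 2) := by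
      refine le_of_sq_le_sq ?_ (by positivity)
      rw [mul_pow, mul_pow, sq_sqrt (by positivity), sq_sqrt (by positivity)]
      nlinarith [n.cast_nonneg (α := ℝ)]
    have := (halfRising_pos n).le
    rw [Nat.factorial_succ, halfRising_succ]
    push_cast
    calc ((n : ℝ) + 1) * n.factorial ≤ (n + 1) * (2 * √n * halfRising n) := by gcongr
      _ = 2 * ((n + 1) * √n) * halfRising n := by ring
      _ ≤ 2 * (√(n + 1) * (n + 1 / 2)) * halfRising n := by gcongr
      _ = 2 * √(n + 1) * (halfRising n * (n + 1 / 2)) := by ring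

theorem antitoneOn_log_add_half_add_mul_log_sub_mul_log :
    AntitoneOn (fun x : ℝ => log (x + 1 / 2) + x * log x - (x + 1) * log (x + 1)) (Set.Ici 0) := by
  have hasDeriv (x : ℝ) (hx : 0 < x) :
      HasDerivAt (fun x : ℝ => log (x + 1 / 2) + x * log x - (x + 1) * log (x + 1))
        (1 / (x + 1 / 2) - log (1 + 1 / x)) x := by
    have h₁ : HasDerivAt (fun x : ℝ => log (x + 1 / 2)) (1 / (x + 1 / 2)) x :=
      ((hasDerivAt_id x).add_const (1 / 2)).log (by dsimp only [id]; positivity)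
    have h₂ := (hasDerivAt_mul_log (x := x + 1) (by positivity)).comp_add_const x 1
    refine ((h₁.add (hasDerivAt_mul_log hx.ne')).sub h₂).congr_deriv ?_
    rw [one_add_div hx.ne', log_div (by positivity) hx.ne']
    ring
  refine antitoneOn_of_deriv_nonpos (convex_Ici 0) ?_ ?_ ?_
  · have h : ContinuousOn (fun x : ℝ => log (x + 1 / 2)) (Set.Ici 0) :=
      ContinuousOn.log (by fun_prop) fun x (hx : 0 ≤ x) => by positivity
    exact (h.add continuous_mul_log.continuousOn).sub
      (continuous_mul_log.comp (continuous_add_const 1)).continuousOn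
  all_goals intro x hx; rw [interior_Ici, Set.mem_Ioi] at hx
  · exact (hasDeriv x hx).differentiableAt.differentiableWithinAt
  · have : 2 * (1 / x) / (1 / x + 2) = 1 / (x + 1 / 2) := by field_simp; ring
    have := le_log_one_add_of_nonneg (one_div_nonneg.mpr hx.le)
    rw [(hasDeriv x hx).deriv]
    linarith

theorem exp_natCast_mul_log_self (k : ℕ) : exp (k * log k) = (k : ℝ) ^ k := by
  rw [← log_pow, exp_log (mod_cast Nat.pow_self_pos)]

theorem halfRising_add_div_pow_self_le (k m : ℕ) :
    halfRising (k + m) / ((k + m : ℕ) : ℝ) ^ (k + m) ≤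
      halfRising k / (k : ℝ) ^ k * (halfRising m / (m : ℝ) ^ m) := by
  refine map_add_le_mul_of_antitone_ratio (u := fun k => halfRising k / (k : ℝ) ^ k)
    (r := fun k => exp (log (k + 1 / 2) + k * log k - (k + 1) * log (k + 1)))
    (by simp [halfRising_zero]) (fun k => by have := (halfRising_pos k).le; positivity)
    (fun k => (exp_pos _).le) ?_ (fun k => ?_) k m
  · exact fun i j hij => exp_le_exp.mpr <| antitoneOn_log_add_half_add_mul_log_sub_mul_log
      (Set.mem_Ici.mpr i.cast_nonneg) (Set.mem_Ici.mpr j.cast_nonneg) (Nat.cast_le.mpr hij)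
  · have hk : (k : ℝ) ^ k ≠ 0 := mod_cast Nat.pow_self_pos.ne'
    have hexp := exp_natCast_mul_log_self (k + 1)
    push_cast at hexp ⊢
    rw [halfRising_succ, exp_sub, exp_add, exp_log (by positivity), exp_natCast_mul_log_self, hexp]
    field_simp

theorem maxLikelihood_pos (k m : ℕ) : 0 < maxLikelihood k m := by
  have hk : (0 : ℝ) < (k : ℝ) ^ k := mod_cast Nat.pow_self_pos
  have hm : (0 : ℝ) < (m : ℝ) ^ m := mod_cast Nat.pow_self_pos
  have hkm : (0 : ℝ) < ((k : ℝ) + m) ^ (k + m) := mod_cast Nat.pow_self_pos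
  rw [maxLikelihood, div_pow, div_pow, div_mul_div_comm, ← pow_add]
  positivity

theorem maxLikelihood_le {k m : ℕ} (h : 1 ≤ k + m) :
    maxLikelihood k m ≤
      2 * √(k + m : ℕ) * (halfRising k * halfRising m / (k + m).factorial) := by
  have hk : (0 : ℝ) < (k : ℝ) ^ k := mod_cast Nat.pow_self_pos
  have hm : (0 : ℝ) < (m : ℝ) ^ m := mod_cast Nat.pow_self_pos
  have hkm : (0 : ℝ) < ((k + m : ℕ) : ℝ) ^ (k + m) := mod_cast Nat.pow_self_pos
  have hfac := factorial_le_two_mul_sqrt_mul_halfRising h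
  have hmul := halfRising_add_div_pow_self_le k m
  rw [div_mul_div_comm, div_le_div_iff₀ hkm (by positivity)] at hmul
  rw [maxLikelihood, ← Nat.cast_add, div_pow, div_pow, div_mul_div_comm, ← pow_add, ← mul_div_assoc,
    div_le_div_iff₀ hkm (by positivity)]
  calc (k : ℝ) ^ k * (m : ℝ) ^ m * (k + m).factorial
      ≤ (k : ℝ) ^ k * (m : ℝ) ^ m * (2 * √(k + m : ℕ) * halfRising (k + m)) := by gcongr
    _ = 2 * √(k + m : ℕ) * (halfRising (k + m) * ((k : ℝ) ^ k * (m : ℝ) ^ m)) := by ring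
    _ ≤ 2 * √(k + m : ℕ) * (halfRising k * halfRising m * ((k + m : ℕ) : ℝ) ^ (k + m)) := by gcongr
    _ = 2 * √(k + m : ℕ) * (halfRising k * halfRising m) * ((k + m : ℕ) : ℝ) ^ (k + m) := by ring

theorem sum_antidiagonal_choose_mul_maxLikelihood_le {n : ℕ} (hn : 1 ≤ n) :
    ∑ ij ∈ antidiagonal n, (n.choose ij.1 : ℝ) * maxLikelihood ij.1 ij.2 ≤ 2 * √n := by
  calc ∑ ij ∈ antidiagonal n, (n.choose ij.1 : ℝ) * maxLikelihood ij.1 ij.2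
      ≤ ∑ ij ∈ antidiagonal n, (n.choose ij.1 : ℝ) *
          (2 * √n * (halfRising ij.1 * halfRising ij.2 / n.factorial)) := by
        refine sum_le_sum fun ij hij => mul_le_mul_of_nonneg_left ?_ (Nat.cast_nonneg _)
        obtain rfl := mem_antidiagonal.mp hij
        exact maxLikelihood_le hn
    _ = 2 * √n * ((∑ ij ∈ antidiagonal n, (n.choose ij.1 : ℝ) *
          (halfRising ij.1 * halfRising ij.2)) / n.factorial) := by
        rw [sum_div, mul_sum]
        exact sum_congr rfl fun ij _ => by ring
    _ = 2 * √n := by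
        rw [sum_antidiagonal_choose_mul_halfRising, div_self (by positivity), mul_one]

theorem pow_mul_exp_sub_le {c u : ℝ} (hc : 0 < c) (hu : 0 ≤ u) (k : ℕ) :
    u ^ k * exp (k - c * u) ≤ (k / c) ^ k := by
  rcases k.cast_nonneg (α := ℝ).eq_or_lt with hk | hk
  · obtain rfl : k = 0 := mod_cast hk.symm
    simpa using mul_nonneg hc.le hu
  · have hexp : exp (k - c * u) = exp (1 - c * u / k) ^ k := by
      rw [← exp_nat_mul]; congr 1; field_simp
    rw [hexp, ← mul_pow]
    refine pow_le_pow_left₀ (by positivity) ?_ k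
    calc u * exp (1 - c * u / k)
        = k / c * ((c * u / k - 1 + 1) * exp (1 - c * u / k)) := by field_simp; ring
      _ ≤ k / c * (exp (c * u / k - 1) * exp (1 - c * u / k)) := by
        gcongr; exact add_one_le_exp _
      _ = k / c := by rw [← exp_add]; simp

theorem pow_mul_pow_mul_exp_le_maxLikelihood {u v : ℝ} (hu : 0 ≤ u) (hv : 0 ≤ v) {k m : ℕ}
    (h : 1 ≤ k + m) : u ^ k * v ^ m * exp (((k : ℝ) + m) * (1 - u - v)) ≤ maxLikelihood k m := by
  have hkm : (0 : ℝ) < (k : ℝ) + m := mod_cast h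
  calc u ^ k * v ^ m * exp (((k : ℝ) + m) * (1 - u - v))
      = u ^ k * exp (k - (k + m) * u) * (v ^ m * exp (m - (k + m) * v)) := by
        rw [mul_mul_mul_comm, ← exp_add]; ring_nf
    _ ≤ maxLikelihood k m :=
      mul_le_mul (pow_mul_exp_sub_le hkm hu k) (pow_mul_exp_sub_le hkm hv m) (by positivity)
        (by positivity)

end KrichevskyTrofimov

section BinaryDivergence

/-- The affine minorants of the binary divergence: by Legendre duality, `kl(q ‖ p)` is the supremum
over `α` and `β` of `klMinorant α β q p`, attained at `exp α = q / p` and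
`exp β = (1 - q) / (1 - p)`. -/
noncomputable def klMinorant (α β q p : ℝ) : ℝ :=
  α * q + β * (1 - q) + (1 - exp α * p - exp β * (1 - p))

theorem mul_log_div_le_mul_log_add_div {q p ε : ℝ} (hq : 0 ≤ q) (hp : 0 < p) (hε : 0 ≤ ε) :
    q * log (q / p) ≤ log ((q + ε) / p) * q := by
  rcases hq.eq_or_lt with rfl | hq
  · simp
  · rw [mul_comm]
    gcongr
    linarith

theorem exists_binKl_le_klMinorant_add {q p ε : ℝ} (hq : q ∈ Set.Icc (0 : ℝ) 1)
    (hp : p ∈ Set.Icc (0 : ℝ) 1) (hε : 0 < ε) :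
    ∃ α β, binKl q p ≤ klMinorant α β q p + ε := by
  obtain ⟨hq₀, hq₁⟩ := hq
  rw [← sub_nonneg] at hq₁
  -- At the endpoints `log (q / 0) = 0` turns the infinite terms of `kl(q ‖ p)` into zeros.
  have of_binKl_nonpos (h : binKl q p ≤ 0) : ∃ α β, binKl q p ≤ klMinorant α β q p + ε :=
    ⟨0, 0, by simp only [klMinorant, exp_zero]; linarith⟩
  rcases hp.1.eq_or_lt with rfl | hp₀
  · refine of_binKl_nonpos ?_
    simpa [binKl] using mul_nonpos_of_nonneg_of_nonpos hq₁ (log_nonpos hq₁ (by linarith))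
  rcases hp.2.eq_or_lt with rfl | hp₁
  · refine of_binKl_nonpos ?_
    simpa [binKl] using mul_nonpos_of_nonneg_of_nonpos hq₀ (log_nonpos hq₀ (by linarith))
  rw [← sub_pos] at hp₁
  refine ⟨log ((q + ε / 2) / p), log ((1 - q + ε / 2) / (1 - p)), ?_⟩
  have := mul_log_div_le_mul_log_add_div hq₀ hp₀ (half_pos hε).le
  have := mul_log_div_le_mul_log_add_div hq₁ hp₁ (half_pos hε).le
  rw [binKl, klMinorant, exp_log (by positivity), exp_log (by positivity),
    div_mul_cancel₀ _ hp₀.ne', div_mul_cancel₀ _ hp₁.ne']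
  linarith

theorem ofReal_binKl_le_of_forall_klMinorant_le {q p : ℝ} (hq : q ∈ Set.Icc (0 : ℝ) 1)
    (hp : p ∈ Set.Icc (0 : ℝ) 1) {B : ℝ≥0∞}
    (hB : ∀ α β, ENNReal.ofReal (klMinorant α β q p) ≤ B) : ENNReal.ofReal (binKl q p) ≤ B := by
  refine ENNReal.le_of_forall_pos_le_add fun ε hε _ => ?_
  obtain ⟨α, β, h⟩ := exists_binKl_le_klMinorant_add hq hp (NNReal.coe_pos.mpr hε)
  calc ENNReal.ofReal (binKl q p) ≤ ENNReal.ofReal (klMinorant α β q p + ε) :=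
        ENNReal.ofReal_le_ofReal h
    _ ≤ ENNReal.ofReal (klMinorant α β q p) + ENNReal.ofReal ε := ENNReal.ofReal_add_le
    _ ≤ B + ε := by rw [ENNReal.ofReal_coe_nnreal]; gcongr; exact hB α β

theorem klMinorant_eq (α β q p : ℝ) :
    klMinorant α β q p = (α - β) * q - (exp α - exp β) * p + (β + 1 - exp β) := by
  rw [klMinorant]
  ring

theorem measurable_klMinorant (α β : ℝ) :
    Measurable fun qp : ℝ × ℝ => klMinorant α β qp.1 qp.2 := by
  unfold klMinorant
  fun_prop

theorem integrable_klMinorant {H : Type*} [MeasurableSpace H] {Q : Measure H} [IsFiniteMeasure Q]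
    {q p : H → ℝ} (hq : Integrable q Q) (hp : Integrable p Q) (α β : ℝ) :
    Integrable (fun h => klMinorant α β (q h) (p h)) Q := by
  unfold klMinorant
  fun_prop

theorem integral_klMinorant {H : Type*} [MeasurableSpace H] {Q : Measure H}
    [IsProbabilityMeasure Q] {q p : H → ℝ} (hq : Integrable q Q) (hp : Integrable p Q) (α β : ℝ) :
    ∫ h, klMinorant α β (q h) (p h) ∂Q = klMinorant α β (∫ h, q h ∂Q) (∫ h, p h ∂Q) := by
  simp only [klMinorant_eq]
  rw [integral_add (by fun_prop) (by fun_prop), integral_sub (by fun_prop) (by fun_prop),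
    integral_const_mul, integral_const_mul, integral_const, probReal_univ, one_smul]

end BinaryDivergence

section ChangeOfMeasure

variable {H : Type*} [MeasurableSpace H] {Q Q₀ : Measure H} [IsProbabilityMeasure Q]
  [SigmaFinite Q₀]

theorem integral_le_integral_llr_add_log_integral_exp {f : H → ℝ} (hac : Q ≪ Q₀)
    (hllr : Integrable (llr Q Q₀) Q) (hf : Integrable f Q)
    (hexp : Integrable (fun h => exp (f h)) Q₀) :
    ∫ h, f h ∂Q ≤ ∫ h, llr Q Q₀ h ∂Q + log (∫ h, exp (f h) ∂Q₀) := by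
  have : NeZero Q₀ := ⟨fun h => IsProbabilityMeasure.ne_zero Q (by simpa [h] using hac)⟩
  have := isProbabilityMeasure_tilted hexp
  have gibbs := InformationTheory.integral_llr_add_sub_measure_univ_nonneg
    (hac.trans (absolutelyContinuous_tilted hexp)) (integrable_llr_tilted_right hac hf hllr hexp)
  rw [integral_llr_tilted_right hac hf hexp hllr, probReal_univ, probReal_univ] at gibbs
  linarith

theorem ofReal_integral_le_klDiv_add_log_integral_exp {f : H → ℝ} (hf : Integrable f Q)
    (hexp : Integrable (fun h => exp (f h)) Q₀) :
    ENNReal.ofReal (∫ h, f h ∂Q) ≤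
      klDiv Q Q₀ + ENNReal.ofReal (log (∫ h, exp (f h) ∂Q₀)) := by
  rw [klDiv]
  split_ifs with h
  · exact (ENNReal.ofReal_le_ofReal
      (integral_le_integral_llr_add_log_integral_exp h.1 h.2 hf hexp)).trans ENNReal.ofReal_add_le
  · simp

theorem ofReal_binKl_integral_le [NeZero Q₀] {q p : H → ℝ} (hqm : Measurable q)
    (hpm : Measurable p) (hq : ∀ h, q h ∈ Set.Icc (0 : ℝ) 1)
    (hp : ∀ h, p h ∈ Set.Icc (0 : ℝ) 1) {n : ℕ} (hn : 1 ≤ n) {C : ℝ}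
    (hC : ∀ α β, ∫⁻ h, ENNReal.ofReal (exp (n * klMinorant α β (q h) (p h))) ∂Q₀ ≤
      ENNReal.ofReal C) :
    ENNReal.ofReal (binKl (∫ h, q h ∂Q) (∫ h, p h ∂Q)) ≤
      (klDiv Q Q₀ + ENNReal.ofReal (log C)) / n := by
  have hqi : Integrable q Q := .of_mem_Icc 0 1 hqm.aemeasurable (ae_of_all _ hq)
  have hpi : Integrable p Q := .of_mem_Icc 0 1 hpm.aemeasurable (ae_of_all _ hp)
  refine ofReal_binKl_le_of_forall_klMinorant_le
    ((convex_Icc 0 1).integral_mem isClosed_Icc (ae_of_all _ hq) hqi)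
    ((convex_Icc 0 1).integral_mem isClosed_Icc (ae_of_all _ hp) hpi) fun α β => ?_
  set f : H → ℝ := fun h => n * klMinorant α β (q h) (p h)
  have hfm : Measurable f := ((measurable_klMinorant α β).comp (hqm.prodMk hpm)).const_mul _
  have exp_nonneg : 0 ≤ᵐ[Q₀] fun h => exp (f h) := ae_of_all _ fun h => (exp_pos _).le
  have hexp : Integrable (fun h => exp (f h)) Q₀ :=
    ⟨(measurable_exp.comp hfm).aestronglyMeasurable,
      (hasFiniteIntegral_iff_ofReal exp_nonneg).mpr ((hC α β).trans_lt ENNReal.ofReal_lt_top)⟩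
  have integral_exp_le : ∫ h, exp (f h) ∂Q₀ ≤ C := by
    have := hC α β
    rw [← ofReal_integral_eq_lintegral_ofReal hexp exp_nonneg,
      ENNReal.ofReal_le_ofReal_iff'] at this
    exact this.resolve_right (integral_exp_pos hexp).not_ge
  rw [ENNReal.le_div_iff_mul_le (by simp [Nat.one_le_iff_ne_zero.mp hn]) (by simp), mul_comm,
    ← ENNReal.ofReal_natCast, ← ENNReal.ofReal_mul n.cast_nonneg, ← integral_klMinorant hqi hpi,
    ← integral_const_mul]
  calc ENNReal.ofReal (∫ h, f h ∂Q)
      ≤ klDiv Q Q₀ + ENNReal.ofReal (log (∫ h, exp (f h) ∂Q₀)) :=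
        ofReal_integral_le_klDiv_add_log_integral_exp
          ((integrable_klMinorant hqi hpi α β).const_mul _) hexp
    _ ≤ klDiv Q Q₀ + ENNReal.ofReal (log C) := by
        gcongr
        exact integral_exp_pos hexp

end ChangeOfMeasure

section BernoulliWeight

variable {ι : Type*} [Fintype ι] [DecidableEq ι]

/-- The probability that a random subset of `ι`, containing each `i` independently with probability
`x i`, equals `t`. -/
noncomputable def bernoulliWeight (x : ι → ℝ) (t : Finset ι) : ℝ :=
  ∏ i, if i ∈ t then x i else 1 - x i

theorem bernoulliWeight_mem_Icc {x : ι → ℝ} (hx : ∀ i, x i ∈ Set.Icc (0 : ℝ) 1) (t : Finset ι) :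
    bernoulliWeight x t ∈ Set.Icc (0 : ℝ) 1 := by
  refine unitInterval.prod_mem fun i _ => ?_
  split_ifs
  exacts [hx i, Set.Icc.mem_iff_one_sub_mem.mp (hx i)]

theorem bernoulliWeight_const (p : ℝ) (t : Finset ι) :
    bernoulliWeight (fun _ => p) t = p ^ t.card * (1 - p) ^ tᶜ.card := by
  rw [bernoulliWeight, prod_ite, prod_const, prod_const, filter_univ_mem, ← compl_filter,
    filter_univ_mem]

theorem measurable_bernoulliWeight (t : Finset ι) :
    Measurable fun x : ι → ℝ => bernoulliWeight x t := by
  refine Finset.measurable_prod _ fun i _ => ?_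
  split_ifs <;> fun_prop

theorem prod_mul_add_one_sub_mul_eq_sum_bernoulliWeight (x : ι → ℝ) (a b : ℝ) :
    ∏ i, (x i * a + (1 - x i) * b) = ∑ t, bernoulliWeight x t * (a ^ t.card * b ^ tᶜ.card) := by
  rw [Fintype.prod_add]
  refine sum_congr rfl fun t _ => ?_
  rw [bernoulliWeight, prod_ite, filter_univ_mem, ← compl_filter, filter_univ_mem,
    prod_mul_distrib, prod_mul_distrib, prod_const, prod_const, mul_mul_mul_comm]

theorem exp_sum_le_sum_bernoulliWeight {x : ι → ℝ} (hx : ∀ i, x i ∈ Set.Icc (0 : ℝ) 1) (α β : ℝ) :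
    exp (∑ i, (x i * α + (1 - x i) * β)) ≤
      ∑ t, bernoulliWeight x t * (exp α ^ t.card * exp β ^ tᶜ.card) := by
  rw [exp_sum, ← prod_mul_add_one_sub_mul_eq_sum_bernoulliWeight]
  exact prod_le_prod (fun i _ => (exp_pos _).le) fun i _ => convexOn_exp.2 (Set.mem_univ α)
    (Set.mem_univ β) (hx i).1 (sub_nonneg.mpr (hx i).2) (add_sub_cancel _ _)

variable {E : ι → Type*} [∀ i, MeasurableSpace (E i)] {μ : ∀ i, Measure (E i)}
  [∀ i, IsProbabilityMeasure (μ i)] {g : ∀ i, E i → ℝ}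

theorem integral_bernoulliWeight (hg : ∀ i, Integrable (g i) (μ i)) (t : Finset ι) :
    ∫ S, bernoulliWeight (fun i => g i (S i)) t ∂Measure.pi μ =
      bernoulliWeight (fun i => ∫ z, g i z ∂μ i) t := by
  unfold bernoulliWeight
  rw [integral_fintype_prod_eq_prod fun i z => if i ∈ t then g i z else 1 - g i z]
  refine prod_congr rfl fun i _ => ?_
  split_ifs
  · rfl
  · rw [integral_sub (integrable_const 1) (hg i), integral_const, probReal_univ, one_smul]

theorem lintegral_bernoulliWeight (hgm : ∀ i, Measurable (g i))
    (hg : ∀ i z, g i z ∈ Set.Icc (0 : ℝ) 1) (t : Finset ι) :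
    ∫⁻ S, ENNReal.ofReal (bernoulliWeight (fun i => g i (S i)) t) ∂Measure.pi μ =
      ENNReal.ofReal (bernoulliWeight (fun i => ∫ z, g i z ∂μ i) t) := by
  have mem_Icc (S : ∀ i, E i) : bernoulliWeight (fun i => g i (S i)) t ∈ Set.Icc (0 : ℝ) 1 :=
    bernoulliWeight_mem_Icc (fun i => hg i (S i)) t
  have meas : Measurable fun S : ∀ i, E i => bernoulliWeight (fun i => g i (S i)) t :=
    (measurable_bernoulliWeight t).comp (by fun_prop)
  rw [← integral_bernoulliWeight
      (fun i => .of_mem_Icc 0 1 (hgm i).aemeasurable (ae_of_all _ (hg i))) t,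
    ofReal_integral_eq_lintegral_ofReal (.of_mem_Icc 0 1 meas.aemeasurable (ae_of_all _ mem_Icc))
      (ae_of_all _ fun S => (mem_Icc S).1)]

end BernoulliWeight

section MaurerEnvelope

variable {ι : Type*} [Fintype ι] [DecidableEq ι]

/-- The expectation of `exp (n * kl(|T| / n ‖ p))`, where `n` is the size of `ι` and the random
subset `T` has law `bernoulliWeight x`: the exponential is the ratio of the maximal likelihood of
`T` to its likelihood under `p`. Dividing in `ℝ≥0∞` gives `∞` at sets that are impossible under
`p`. -/
noncomputable def maurerEnvelope (x : ι → ℝ) (p : ℝ) : ℝ≥0∞ :=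
  ∑ t : Finset ι, ENNReal.ofReal (bernoulliWeight x t) *
    (ENNReal.ofReal (maxLikelihood t.card tᶜ.card) /
      ENNReal.ofReal (bernoulliWeight (fun _ : ι => p) t))

theorem measurable_maurerEnvelope {Ω : Type*} [MeasurableSpace Ω] {x : Ω → ι → ℝ} {p : Ω → ℝ}
    (hx : Measurable x) (hp : Measurable p) :
    Measurable fun ω => maurerEnvelope (x ω) (p ω) := by
  have h₁ (t : Finset ι) : Measurable fun ω => bernoulliWeight (x ω) t :=
    (measurable_bernoulliWeight t).comp hx
  have h₂ (t : Finset ι) : Measurable fun ω => bernoulliWeight (fun _ : ι => p ω) t :=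
    (measurable_bernoulliWeight t).comp (by fun_prop)
  unfold maurerEnvelope
  fun_prop

theorem exp_mul_pow_mul_pow_mul_bernoulliWeight_le [Nonempty ι] {p : ℝ}
    (hp : p ∈ Set.Icc (0 : ℝ) 1) (α β : ℝ) (t : Finset ι) :
    exp (Fintype.card ι * (1 - exp α * p - exp β * (1 - p))) *
        (exp α ^ t.card * exp β ^ tᶜ.card) * bernoulliWeight (fun _ => p) t ≤
      maxLikelihood t.card tᶜ.card := by
  have hcard : 1 ≤ t.card + tᶜ.card := by
    rw [card_add_card_compl]
    exact Fintype.card_pos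
  convert pow_mul_pow_mul_exp_le_maxLikelihood (mul_nonneg (exp_pos α).le hp.1)
    (mul_nonneg (exp_pos β).le (sub_nonneg.mpr hp.2)) hcard using 1
  rw [bernoulliWeight_const, ← Nat.cast_add, card_add_card_compl, mul_pow, mul_pow]
  ring

theorem exp_klMinorant_le_sum_bernoulliWeight [Nonempty ι] {x : ι → ℝ}
    (hx : ∀ i, x i ∈ Set.Icc (0 : ℝ) 1) (α β p : ℝ) :
    exp (Fintype.card ι * klMinorant α β ((Fintype.card ι : ℝ)⁻¹ * ∑ i, x i) p) ≤
      ∑ t, bernoulliWeight x t * (exp (Fintype.card ι * (1 - exp α * p - exp β * (1 - p))) *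
        (exp α ^ t.card * exp β ^ tᶜ.card)) := by
  have sum_eq : ∑ i, (x i * α + (1 - x i) * β) =
      α * ∑ i, x i + β * (Fintype.card ι - ∑ i, x i) := by
    rw [sum_add_distrib, ← sum_mul, ← sum_mul, sum_sub_distrib, sum_const, card_univ, nsmul_one]
    ring
  have hmul : (Fintype.card ι : ℝ) * klMinorant α β ((Fintype.card ι : ℝ)⁻¹ * ∑ i, x i) p =
      Fintype.card ι * (1 - exp α * p - exp β * (1 - p)) + ∑ i, (x i * α + (1 - x i) * β) := by
    rw [sum_eq, klMinorant]
    field_simp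
    ring
  calc exp (Fintype.card ι * klMinorant α β ((Fintype.card ι : ℝ)⁻¹ * ∑ i, x i) p)
      = exp (Fintype.card ι * (1 - exp α * p - exp β * (1 - p))) *
          exp (∑ i, (x i * α + (1 - x i) * β)) := by rw [hmul, exp_add]
    _ ≤ exp (Fintype.card ι * (1 - exp α * p - exp β * (1 - p))) *
          ∑ t, bernoulliWeight x t * (exp α ^ t.card * exp β ^ tᶜ.card) := by
        gcongr
        exact exp_sum_le_sum_bernoulliWeight hx α β
    _ = _ := by simp only [mul_sum, mul_left_comm]

theorem ofReal_exp_klMinorant_le_maurerEnvelope [Nonempty ι] {x : ι → ℝ} {p : ℝ}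
    (hx : ∀ i, x i ∈ Set.Icc (0 : ℝ) 1) (hp : p ∈ Set.Icc (0 : ℝ) 1) (α β : ℝ) :
    ENNReal.ofReal
        (exp (Fintype.card ι * klMinorant α β ((Fintype.card ι : ℝ)⁻¹ * ∑ i, x i) p)) ≤
      maurerEnvelope x p := by
  refine (ENNReal.ofReal_le_ofReal (exp_klMinorant_le_sum_bernoulliWeight hx α β p)).trans ?_
  have weight_nonneg (t : Finset ι) : 0 ≤ bernoulliWeight x t := (bernoulliWeight_mem_Icc hx t).1
  rw [ENNReal.ofReal_sum_of_nonneg fun t _ => by have := weight_nonneg t; positivity]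
  refine sum_le_sum fun t _ => ?_
  rw [ENNReal.ofReal_mul (weight_nonneg t)]
  gcongr
  rw [ENNReal.le_div_iff_mul_le (.inr (by simpa using maxLikelihood_pos _ _)) (by simp),
    ← ENNReal.ofReal_mul (by positivity)]
  exact ENNReal.ofReal_le_ofReal (exp_mul_pow_mul_pow_mul_bernoulliWeight_le hp α β t)

theorem sum_finset_maxLikelihood_le [Nonempty ι] :
    ∑ t : Finset ι, maxLikelihood t.card tᶜ.card ≤ 2 * √(Fintype.card ι) := by
  simpa only [sum_finset_apply_card_compl maxLikelihood, nsmul_eq_mul] using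
    sum_antidiagonal_choose_mul_maxLikelihood_le (Fintype.card_pos (α := ι))

variable {Z H : Type*} [MeasurableSpace Z] [MeasurableSpace H] {ℓ : H → Z → ℝ}

theorem measurable_maurerEnvelope_loss {D : Measure Z} [SFinite D]
    (hℓm : Measurable (Function.uncurry ℓ)) :
    Measurable fun Sh : (ι → Z) × H =>
      maurerEnvelope (fun i => ℓ Sh.2 (Sh.1 i)) (∫ z, ℓ Sh.2 z ∂D) :=
  measurable_maurerEnvelope
    (measurable_pi_iff.mpr fun i =>
      hℓm.comp (measurable_snd.prodMk ((measurable_pi_apply i).comp measurable_fst)))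
    (hℓm.stronglyMeasurable.integral_prod_right.measurable.comp measurable_snd)

variable {D : Measure Z} [IsProbabilityMeasure D]

theorem lintegral_maurerEnvelope_le [Nonempty ι] {g : Z → ℝ} (hgm : Measurable g)
    (hg : ∀ z, g z ∈ Set.Icc (0 : ℝ) 1) :
    ∫⁻ S, maurerEnvelope (fun i : ι => g (S i)) (∫ z, g z ∂D) ∂(Measure.pi fun _ => D) ≤
      ENNReal.ofReal (2 * √(Fintype.card ι)) := by
  have meas (t : Finset ι) :
      Measurable fun S : ι → Z => ENNReal.ofReal (bernoulliWeight (fun i => g (S i)) t) :=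
    ((measurable_bernoulliWeight t).comp (by fun_prop)).ennreal_ofReal
  unfold maurerEnvelope
  rw [lintegral_finsetSum _ fun t _ => (meas t).mul_const _]
  calc ∑ t : Finset ι, ∫⁻ S : ι → Z, ENNReal.ofReal (bernoulliWeight (fun i => g (S i)) t) *
          (ENNReal.ofReal (maxLikelihood t.card tᶜ.card) /
            ENNReal.ofReal (bernoulliWeight (fun _ : ι => ∫ z, g z ∂D) t)) ∂(Measure.pi fun _ => D)
      ≤ ∑ t : Finset ι, ENNReal.ofReal (maxLikelihood t.card tᶜ.card) := by
        refine sum_le_sum fun t _ => ?_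
        rw [lintegral_mul_const _ (meas t),
          lintegral_bernoulliWeight (g := fun _ => g) (fun _ => hgm) (fun _ => hg) t]
        exact ENNReal.mul_div_le
    _ = ENNReal.ofReal (∑ t : Finset ι, maxLikelihood t.card tᶜ.card) :=
        (ENNReal.ofReal_sum_of_nonneg fun t _ => (maxLikelihood_pos _ _).le).symm
    _ ≤ ENNReal.ofReal (2 * √(Fintype.card ι)) :=
        ENNReal.ofReal_le_ofReal sum_finset_maxLikelihood_le

theorem lintegral_lintegral_maurerEnvelope_le [Nonempty ι] (hℓm : Measurable (Function.uncurry ℓ))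
    (hℓ : ∀ h z, ℓ h z ∈ Set.Icc (0 : ℝ) 1) (Q₀ : Measure H) [IsProbabilityMeasure Q₀] :
    ∫⁻ S, ∫⁻ h, maurerEnvelope (fun i : ι => ℓ h (S i)) (∫ z, ℓ h z ∂D) ∂Q₀
        ∂(Measure.pi fun _ => D) ≤
      ENNReal.ofReal (2 * √(Fintype.card ι)) := by
  rw [lintegral_lintegral_swap (measurable_maurerEnvelope_loss hℓm).aemeasurable]
  calc _ ≤ ∫⁻ _, ENNReal.ofReal (2 * √(Fintype.card ι)) ∂Q₀ :=
        lintegral_mono fun h => lintegral_maurerEnvelope_le hℓm.of_uncurry_left (hℓ h)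
    _ = ENNReal.ofReal (2 * √(Fintype.card ι)) := by simp

end MaurerEnvelope

section HighProbability

theorem ofReal_one_sub_le_measure_lt_of_lintegral_le {Ω : Type*} [MeasurableSpace Ω]
    {P : Measure Ω} [IsProbabilityMeasure P] {Ψ : Ω → ℝ≥0∞} (hΨ : Measurable Ψ) {c δ : ℝ}
    (hc : 0 < c) (hδ : 0 < δ) (h : ∫⁻ ω, Ψ ω ∂P ≤ ENNReal.ofReal c) :
    ENNReal.ofReal (1 - δ) ≤ P {ω | Ψ ω < ENNReal.ofReal (c / δ)} := by
  have markov : P {ω | ENNReal.ofReal (c / δ) ≤ Ψ ω} ≤ ENNReal.ofReal δ :=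
    calc P {ω | ENNReal.ofReal (c / δ) ≤ Ψ ω}
        ≤ (∫⁻ ω, Ψ ω ∂P) / ENNReal.ofReal (c / δ) :=
          meas_ge_le_lintegral_div hΨ.aemeasurable (ENNReal.ofReal_pos.mpr (by positivity)).ne'
            ENNReal.ofReal_ne_top
      _ ≤ ENNReal.ofReal c / ENNReal.ofReal (c / δ) := by gcongr
      _ = ENNReal.ofReal δ := by
          rw [← ENNReal.ofReal_div_of_pos (by positivity), div_div_cancel₀ hc.ne']
  have compl_eq : {ω | Ψ ω < ENNReal.ofReal (c / δ)} = {ω | ENNReal.ofReal (c / δ) ≤ Ψ ω}ᶜ := by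
    ext ω
    simp
  rw [compl_eq, prob_compl_eq_one_sub (measurableSet_le measurable_const hΨ),
    ENNReal.ofReal_sub _ hδ.le, ENNReal.ofReal_one]
  exact tsub_le_tsub_left markov 1

theorem inv_card_mul_sum_mem_Icc {ι : Type*} [Fintype ι] {x : ι → ℝ}
    (hx : ∀ i, x i ∈ Set.Icc (0 : ℝ) 1) :
    (Fintype.card ι : ℝ)⁻¹ * ∑ i, x i ∈ Set.Icc (0 : ℝ) 1 := by
  refine ⟨mul_nonneg (by positivity) (sum_nonneg fun i _ => (hx i).1), ?_⟩
  refine inv_mul_le_one_of_le₀ ?_ (Nat.cast_nonneg _)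
  simpa using sum_le_sum fun i (_ : i ∈ univ) => (hx i).2

theorem ofReal_binKl_risk_le_of_lintegral_maurerEnvelope_le {ι Z H : Type*} [Fintype ι]
    [DecidableEq ι] [Nonempty ι] [MeasurableSpace Z] [MeasurableSpace H] {D : Measure Z}
    [IsProbabilityMeasure D] {ℓ : H → Z → ℝ} (hℓm : Measurable (Function.uncurry ℓ))
    (hℓ : ∀ h z, ℓ h z ∈ Set.Icc (0 : ℝ) 1) {Q₀ : Measure H} [SigmaFinite Q₀] [NeZero Q₀] {C : ℝ}
    {S : ι → Z}
    (hS : ∫⁻ h, maurerEnvelope (fun i => ℓ h (S i)) (∫ z, ℓ h z ∂D) ∂Q₀ ≤ ENNReal.ofReal C)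
    (Q : Measure H) [IsProbabilityMeasure Q] :
    ENNReal.ofReal (binKl (∫ h, (Fintype.card ι : ℝ)⁻¹ * ∑ i, ℓ h (S i) ∂Q)
        (∫ h, ∫ z, ℓ h z ∂D ∂Q)) ≤
      (klDiv Q Q₀ + ENNReal.ofReal (log C)) / Fintype.card ι := by
  have hqm : Measurable fun h => (Fintype.card ι : ℝ)⁻¹ * ∑ i, ℓ h (S i) :=
    (Finset.measurable_fun_sum univ fun i _ => hℓm.of_uncurry_right).const_mul _
  have hp (h : H) : ∫ z, ℓ h z ∂D ∈ Set.Icc (0 : ℝ) 1 :=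
    (convex_Icc 0 1).integral_mem isClosed_Icc (ae_of_all _ (hℓ h))
      (.of_mem_Icc 0 1 hℓm.of_uncurry_left.aemeasurable (ae_of_all _ (hℓ h)))
  exact ofReal_binKl_integral_le hqm hℓm.stronglyMeasurable.integral_prod_right.measurable
    (fun h => inv_card_mul_sum_mem_Icc fun i => hℓ h (S i)) hp Fintype.card_pos fun α β =>
      (lintegral_mono fun h => ofReal_exp_klMinorant_le_maurerEnvelope
        (fun i => hℓ h (S i)) (hp h) α β).trans hS

end HighProbability

/-- PAC-Bayes bound (Maurer): with probability at least `1 − δ` over an i.i.d. sample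
`S ∼ Dⁿ`, simultaneously for every posterior probability measure `Q`,
`kl(R̂_S(Q) ‖ R_D(Q)) ≤ (KL(Q ‖ Q₀) + log(2√n/δ)) / n`. -/
theorem pac_bayes_kl_bound
    {Z H : Type*} [MeasurableSpace Z] [MeasurableSpace H]
    (D : Measure Z) [IsProbabilityMeasure D]
    (ℓ : H → Z → ℝ) (hℓmeas : Measurable (Function.uncurry ℓ))
    (hℓ01 : ∀ h z, ℓ h z ∈ Set.Icc (0 : ℝ) 1)
    (Q₀ : Measure H) [IsProbabilityMeasure Q₀]
    (n : ℕ) (hn : 1 ≤ n) (δ : ℝ) (hδ : δ ∈ Set.Ioc (0 : ℝ) 1) :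
    (Measure.pi fun _ : Fin n => D)
      {S : Fin n → Z | ∀ Q : Measure H, IsProbabilityMeasure Q →
        ENNReal.ofReal
            (binKl (∫ h, (n : ℝ)⁻¹ * ∑ i, ℓ h (S i) ∂Q) (∫ h, ∫ z, ℓ h z ∂D ∂Q))
          ≤ (klDiv Q Q₀ + ENNReal.ofReal (Real.log (2 * Real.sqrt n / δ))) / n }
      ≥ ENNReal.ofReal (1 - δ) := by
  have : Nonempty (Fin n) := ⟨⟨0, hn⟩⟩
  have lintegral_le := lintegral_lintegral_maurerEnvelope_le (ι := Fin n) (D := D) hℓmeas hℓ01 Q₀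
  rw [Fintype.card_fin] at lintegral_le
  refine (ofReal_one_sub_le_measure_lt_of_lintegral_le
    (measurable_maurerEnvelope_loss hℓmeas).lintegral_prod_right' (by positivity) hδ.1
    lintegral_le).trans (measure_mono fun S hS Q _ => ?_)
  simpa only [Fintype.card_fin] using ofReal_binKl_risk_le_of_lintegral_maurerEnvelope_le
    hℓmeas hℓ01 (Set.mem_ofPred.mp hS).le Q
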